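/- Let r be an odd prime, m ≥ 1, G an extraspecial group of order r^{1+2m} and exponent r, and A = G ⋊ Sp(2m, r) where Sp(2m,r) acts on G fixing Z(G) and inducing on G/Z(G) ≅ F_r^{2m} its natural action. Let U be any subgroup of G properly containing Z(G). Then P_A(U) = P_A(G). -/

import Mathlib

/-- The `A`-prime-power-covering set of a subgroup `H` of `A`. -/
def ppcSet {A : Type*} [Group A] (H : Subgroup A) : Set A :=
  {y | ∃ x ∈ H, (∃ p k : ℕ, p.Prime ∧ orderOf x = p ^ k) ∧ ∃ a : A, a⁻¹ * x * a = y}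

/-!
Symplectic transvections move a nonzero vector `x` to any `y` with `ω(x, y) ≠ 0`, and two nonzero
vectors always have a common non-orthogonal vector, so `Sp` is transitive on nonzero vectors. Hence
for `g` outside the centre some `S ∈ Sp` carries an element `u ∈ U` outside the centre into the
coset of `g`; multiplying `u` by a central element, which `S` fixes, corrects `S u` to `g` exactly.
Thus every element of `G` is conjugate in `G ⋊ Sp` to an element of `U`.
-/

section PrimePowerCovering

variable {A : Type*} [Group A] {H K : Subgroup A}

theorem mem_ppcSet {y : A} :
    y ∈ ppcSet H ↔ (∃ p k : ℕ, p.Prime ∧ orderOf y = p ^ k) ∧ ∃ x ∈ H, IsConj x y := by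
  have orderOf_conj (x a : A) : orderOf (a⁻¹ * x * a) = orderOf x := by
    simpa using (MulAut.conj a⁻¹).orderOf_eq x
  constructor
  · rintro ⟨x, hx, hord, a, rfl⟩
    exact ⟨by rwa [orderOf_conj], x, hx, isConj_iff.mpr ⟨a⁻¹, by rw [inv_inv]⟩⟩
  · rintro ⟨hord, x, hx, hxy⟩
    obtain ⟨a, rfl⟩ := isConj_iff.mp hxy
    rw [← orderOf_conj _ a] at hord
    exact ⟨x, hx, by simpa [mul_assoc] using hord, a⁻¹, by rw [inv_inv]⟩

theorem ppcSet_subset_of_forall_isConj (h : ∀ x ∈ H, ∃ y ∈ K, IsConj y x) :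
    ppcSet H ⊆ ppcSet K := by
  intro z hz
  obtain ⟨hord, x, hx, hxz⟩ := mem_ppcSet.mp hz
  obtain ⟨y, hy, hyx⟩ := h x hx
  exact mem_ppcSet.mpr ⟨hord, y, hy, hyx.trans hxz⟩

theorem ppcSet_mono (h : H ≤ K) : ppcSet H ⊆ ppcSet K :=
  ppcSet_subset_of_forall_isConj fun x hx => ⟨x, h hx, IsConj.refl x⟩

end PrimePowerCovering

section SemidirectProduct

variable {N G : Type*} [Group N] [Group G] {φ : G →* MulAut N}

theorem isConj_inl_inl_apply (g : G) (n : N) :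
    IsConj (SemidirectProduct.inl n : N ⋊[φ] G) (SemidirectProduct.inl (φ g n)) :=
  isConj_iff.mpr ⟨SemidirectProduct.inr g, by rw [SemidirectProduct.inl_aut, map_inv]⟩

theorem ppcSet_map_inl_eq_ppcSet_range_inl {U : Subgroup N}
    (hU : ∀ n : N, ∃ u ∈ U, ∃ g : G, φ g u = n) :
    ppcSet (U.map (SemidirectProduct.inl (φ := φ))) =
      ppcSet (SemidirectProduct.inl (φ := φ)).range := by
  refine (ppcSet_mono (Subgroup.map_le_range _ _)).antisymm (ppcSet_subset_of_forall_isConj ?_)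
  rintro _ ⟨n, rfl⟩
  obtain ⟨u, hu, g, rfl⟩ := hU n
  exact ⟨_, Subgroup.mem_map_of_mem _ hu, isConj_inl_inl_apply g u⟩

theorem exists_mem_apply_eq_of_lt {Z U : Subgroup N} (hU : Z < U)
    (hfix : ∀ g, ∀ z ∈ Z, φ g z = z)
    (htrans : ∀ u ∉ Z, ∀ n ∉ Z, ∃ g, (φ g u)⁻¹ * n ∈ Z) (n : N) :
    ∃ u ∈ U, ∃ g, φ g u = n := by
  by_cases hn : n ∈ Z
  · exact ⟨n, hU.le hn, 1, by rw [map_one, MulAut.one_apply]⟩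
  obtain ⟨u, huU, hu⟩ := SetLike.exists_of_lt hU
  obtain ⟨g, hg⟩ := htrans u hu n hn
  refine ⟨u * ((φ g u)⁻¹ * n), mul_mem huU (hU.le hg), g, ?_⟩
  rw [map_mul, hfix g _ hg, mul_inv_cancel_left]

end SemidirectProduct

theorem exists_apply_ne_zero_and_apply_ne_zero {R M N P : Type*} [Semiring R]
    [AddCommMonoid M] [AddCommMonoid N] [AddCommMonoid P] [Module R M] [Module R N] [Module R P]
    {f : M →ₗ[R] N} {g : M →ₗ[R] P} (hf : f ≠ 0) (hg : g ≠ 0) :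
    ∃ z, f z ≠ 0 ∧ g z ≠ 0 := by
  obtain ⟨a, ha⟩ := DFunLike.exists_ne hf
  obtain ⟨b, hb⟩ := DFunLike.exists_ne hg
  rw [LinearMap.zero_apply] at ha hb
  by_cases hga : g a = 0
  · by_cases hfb : f b = 0
    · exact ⟨a + b, by rwa [map_add, hfb, add_zero], by rwa [map_add, hga, zero_add]⟩
    · exact ⟨b, hfb, hb⟩
  · exact ⟨a, ha, hga⟩

section AlternatingForm

open LinearMap (BilinForm transvection)

theorem comp_transvection_eq_self {R V : Type*} [CommRing R] [AddCommGroup V] [Module R V]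
    {B : BilinForm R V} (hB : B.IsAlt) (c : R) (a : V) :
    B.comp (transvection (c • B a) a) (transvection (c • B a) a) = B := by
  ext x y
  simp only [BilinForm.comp_apply, LinearMap.transvection.apply, map_add, map_smul,
    LinearMap.add_apply, LinearMap.smul_apply, smul_eq_mul, hB.self_eq_zero, ← hB.neg_eq a x]
  ring

variable {K V : Type*} [Field K] [AddCommGroup V] [Module K V] {B : BilinForm K V}

theorem transvection_sub_apply (hB : B.IsAlt) {x y : V} (hxy : B x y ≠ 0) :
    transvection ((B y x)⁻¹ • B (y - x)) (y - x) x = y := by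
  have hyx : B y x ≠ 0 := mt hB.eq_iff.mp hxy
  rw [LinearMap.transvection.apply, LinearMap.smul_apply, map_sub, LinearMap.sub_apply,
    hB.self_eq_zero, sub_zero, smul_eq_mul, inv_mul_cancel₀ hyx, one_smul, add_sub_cancel]

theorem exists_isometry_apply_eq_of_apply_ne_zero (hB : B.IsAlt) {x y : V} (hxy : B x y ≠ 0) :
    ∃ f : V →ₗ[K] V, B.comp f f = B ∧ f x = y :=
  ⟨_, comp_transvection_eq_self hB _ _, transvection_sub_apply hB hxy⟩

theorem exists_isometry_apply_eq (hB : B.IsAlt) (hnd : B.SeparatingLeft) {x y : V}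
    (hx : x ≠ 0) (hy : y ≠ 0) :
    ∃ f : V →ₗ[K] V, B.comp f f = B ∧ f x = y := by
  have apply_ne_zero {v : V} (hv : v ≠ 0) : B v ≠ 0 :=
    mt (LinearMap.separatingLeft_iff_linear_nontrivial.mp hnd v) hv
  obtain ⟨z, hxz, hyz⟩ :=
    exists_apply_ne_zero_and_apply_ne_zero (apply_ne_zero hx) (apply_ne_zero hy)
  obtain ⟨f, hf, hfx⟩ := exists_isometry_apply_eq_of_apply_ne_zero hB hxz
  obtain ⟨g, hg, hgz⟩ := exists_isometry_apply_eq_of_apply_ne_zero hB (mt hB.eq_iff.mp hyz)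
  refine ⟨g ∘ₗ f, ?_, by rw [LinearMap.comp_apply, hfx, hgz]⟩
  rw [← BilinForm.comp_comp, hg, hf]

end AlternatingForm

section SymplecticGroup

open Matrix

variable {l : Type*} [Fintype l] [DecidableEq l]

theorem isAlt_toBilin'_J (R : Type*) [CommRing R] : (toBilin' (J l R)).IsAlt := by
  intro v
  obtain ⟨a, b, rfl⟩ : ∃ a b, v = Sum.elim a b := ⟨_, _, (Sum.elim_comp_inl_inr v).symm⟩
  rw [toBilin'_apply', J, fromBlocks_mulVec]
  simp [neg_mulVec, dotProduct_comm]

theorem toMatrix'_mem_symplecticGroup_iff {R : Type*} [CommRing R]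
    {f : (l ⊕ l → R) →ₗ[R] (l ⊕ l → R)} :
    f.toMatrix' ∈ symplecticGroup l R ↔ (toBilin' (J l R)).comp f f = toBilin' (J l R) := by
  rw [SymplecticGroup.mem_iff', ← toBilin'.injective.eq_iff, ← toBilin'_comp, toLin'_toMatrix']

theorem exists_symplecticGroup_mulVec_eq {K : Type*} [Field K] {x y : l ⊕ l → K}
    (hx : x ≠ 0) (hy : y ≠ 0) :
    ∃ S : symplecticGroup l K, (S : Matrix (l ⊕ l) (l ⊕ l) K) *ᵥ x = y := by
  have hnd := LinearMap.BilinForm.nondegenerate_toBilin'_of_det_ne_zero' (J l K)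
    (isUnit_det_J l K).ne_zero
  obtain ⟨f, hf, hfx⟩ := exists_isometry_apply_eq (isAlt_toBilin'_J K) hnd.1 hx hy
  exact ⟨⟨f.toMatrix', toMatrix'_mem_symplecticGroup_iff.mpr hf⟩, by rwa [f.toMatrix'_mulVec]⟩

end SymplecticGroup

theorem stmt16_general {l K G : Type*} [Fintype l] [DecidableEq l] [Field K] [Group G]
    (Z : Subgroup G) [Z.Normal] (φ : Matrix.symplecticGroup l K →* MulAut G)
    (hfix : ∀ S, ∀ z ∈ Z, φ S z = z)
    (ι : G ⧸ Z →* Multiplicative (l ⊕ l → K)) (hι : Function.Injective ι)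
    (hnat : ∀ S g, ι (QuotientGroup.mk (φ S g)) =
      Multiplicative.ofAdd
        (Matrix.mulVec (S : Matrix (l ⊕ l) (l ⊕ l) K) (ι (QuotientGroup.mk g)).toAdd))
    (U : Subgroup G) (hU : Z < U) :
    ppcSet (Subgroup.map (SemidirectProduct.inl (φ := φ)) U) =
      ppcSet (SemidirectProduct.inl (φ := φ)).range := by
  have toAdd_ne_zero {g : G} (hg : g ∉ Z) : (ι (QuotientGroup.mk g)).toAdd ≠ 0 := by
    rwa [Ne, toAdd_eq_zero, map_eq_one_iff ι hι, QuotientGroup.eq_one_iff]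
  refine ppcSet_map_inl_eq_ppcSet_range_inl (exists_mem_apply_eq_of_lt hU hfix ?_)
  intro u hu g hg
  obtain ⟨S, hS⟩ := exists_symplecticGroup_mulVec_eq (toAdd_ne_zero hu) (toAdd_ne_zero hg)
  exact ⟨S, QuotientGroup.eq.mp (hι (by rw [hnat, hS, ofAdd_toAdd]))⟩

theorem stmt16 (r : ℕ) (hr : r.Prime) (hodd : Odd r) (m : ℕ) (hm : 1 ≤ m)
    -- `G` is extraspecial of order `r^(1+2m)` and exponent `r` :
    (G : Type*) [Group G] [Finite G]
    (hcard : Nat.card G = r ^ (1 + 2 * m))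
    (hexp : ∀ g : G, g ^ r = 1)
    (hZcard : Nat.card (Subgroup.center G) = r)
    (hZcomm : Subgroup.center G = commutator G)
    -- `Sp(2m, r)` acts on `G` fixing the center pointwise :
    (φ : Matrix.symplecticGroup (Fin m) (ZMod r) →* MulAut G)
    (hfix : ∀ (S : Matrix.symplecticGroup (Fin m) (ZMod r)) (z : G),
      z ∈ Subgroup.center G → φ S z = z)
    -- and inducing on `G/Z(G) ≅ (ZMod r)^{2m}` its natural action :
    (ι : (G ⧸ Subgroup.center G) ≃* Multiplicative ((Fin m ⊕ Fin m) → ZMod r))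
    (hnat : ∀ (S : Matrix.symplecticGroup (Fin m) (ZMod r)) (g : G),
      ι (QuotientGroup.mk (φ S g)) =
        Multiplicative.ofAdd
          (Matrix.mulVec (S : Matrix (Fin m ⊕ Fin m) (Fin m ⊕ Fin m) (ZMod r))
            (ι (QuotientGroup.mk g)).toAdd))
    -- `U` is any subgroup of `G` properly containing the center :
    (U : Subgroup G) (hU : Subgroup.center G < U) :
    ppcSet (Subgroup.map (SemidirectProduct.inl (φ := φ)) U)
      = ppcSet (SemidirectProduct.inl (φ := φ)).range := by
  have : Fact r.Prime := ⟨hr⟩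
  exact stmt16_general _ φ hfix ι.toMonoidHom ι.injective hnat U hU
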